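/- (Correctness of the UDDSketch merge, Theorem 1.) Let γ₀ > 1 be a real, let D₁ and D₂ be multisets of positive reals, and suppose the sketch of D₁ has been collapsed t₁ times and the sketch of D₂ has been collapsed t₂ times, so that they are sk_{γ₀^(2^{t₁})}(D₁) and sk_{γ₀^(2^{t₂})}(D₂) respectively. Then for every natural number t with t ≥ t₁ and t ≥ t₂, UC^[t−t₁](sk_{γ₀^(2^{t₁})}(D₁)) + UC^[t−t₂](sk_{γ₀^(2^{t₂})}(D₂)) = sk_{γ₀^(2^t)}(D₁ ⊎ D₂). That is, aligning the two sketches to a common base by further collapses and summing them pointwise produces exactly the sketch that would be obtained by processing the union D₁ ⊎ D₂ directly with base γ₀^(2^t). -/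

import Mathlib

/-!
Squaring the base halves the logarithm: `logb (γ ^ 2) x = logb γ x / 2`. Since
`⌈y / 2⌉ = j` exactly when `⌈y⌉` is `2 * j - 1` or `2 * j`, one collapse turns the `γ`-sketch into
the `γ ^ 2`-sketch (`UC_sk`). Iterating brings both sketches to the base `γ₀ ^ 2 ^ t`, where the
claim is additivity of counting over multiset sums.
-/

/-- The γ-sketch of a multiset D of positive reals. -/
noncomputable def sk (γ : ℝ) (D : Multiset ℝ) : ℤ → ℕ :=
  fun k => (D.filter (fun x => ⌈Real.logb γ x⌉ = k)).card

/-- The uniform collapse operator. -/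
def UC (f : ℤ → ℕ) : ℤ → ℕ := fun j => f (2 * j - 1) + f (2 * j)

theorem ceil_half_eq_iff (y : ℝ) (j : ℤ) :
    ⌈y / 2⌉ = j ↔ ⌈y⌉ = 2 * j - 1 ∨ ⌈y⌉ = 2 * j := by
  have h : ∀ n : ℤ, ⌈y / 2⌉ ≤ n ↔ ⌈y⌉ ≤ 2 * n := by
    intro n
    rw [Int.ceil_le, Int.ceil_le]
    push_cast
    constructor <;> intro h <;> linarith
  have h1 := h j
  have h2 := h (j - 1)
  omega

theorem logb_sq_base (γ x : ℝ) : Real.logb (γ ^ 2) x = Real.logb γ x / 2 := by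
  simp only [Real.logb, Real.log_pow]
  rw [div_div, mul_comm]
  norm_num

theorem UC_sk (γ : ℝ) (D : Multiset ℝ) : UC (sk γ D) = sk (γ ^ 2) D := by
  funext j
  simp only [UC, sk, logb_sq_base, ceil_half_eq_iff]
  rw [← Multiset.card_add, Multiset.filter_add_filter]
  -- The two fine buckets are disjoint, so the intersection term is empty.
  have h : D.filter (fun x => ⌈Real.logb γ x⌉ = 2 * j - 1 ∧ ⌈Real.logb γ x⌉ = 2 * j) = 0 := by
    rw [Multiset.filter_eq_nil]
    intro x _
    omega
  rw [h, add_zero]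

theorem UC_iterate_sk (γ : ℝ) (D : Multiset ℝ) (n : ℕ) :
    UC^[n] (sk γ D) = sk (γ ^ 2 ^ n) D := by
  induction n with
  | zero => simp
  | succ n ih => rw [Function.iterate_succ_apply', ih, UC_sk, ← pow_mul, ← pow_succ]

theorem sk_add (γ : ℝ) (D₁ D₂ : Multiset ℝ) : sk γ (D₁ + D₂) = sk γ D₁ + sk γ D₂ := by
  funext k
  simp [sk]

/-- Correctness of the UDDSketch merge, Theorem 1: aligning
two sketches, collapsed t₁ and t₂ times respectively, to a common base
γ₀^(2^t) by further collapses and summing them pointwise produces exactly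
the sketch of the multiset sum D₁ ⊎ D₂ at base γ₀^(2^t). -/
theorem merge_correctness (γ₀ : ℝ) (hγ : 1 < γ₀) (D₁ D₂ : Multiset ℝ)
    (hpos₁ : ∀ x ∈ D₁, 0 < x) (hpos₂ : ∀ x ∈ D₂, 0 < x)
    (t₁ t₂ t : ℕ) (h₁ : t₁ ≤ t) (h₂ : t₂ ≤ t) :
    UC^[t - t₁] (sk (γ₀ ^ 2 ^ t₁) D₁) + UC^[t - t₂] (sk (γ₀ ^ 2 ^ t₂) D₂) =
      sk (γ₀ ^ 2 ^ t) (D₁ + D₂) := by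
  rw [UC_iterate_sk, UC_iterate_sk, ← pow_mul, ← pow_mul, ← pow_add, ← pow_add,
    Nat.add_sub_cancel' h₁, Nat.add_sub_cancel' h₂, sk_add]
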